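/- arXiv:2508.04769 — 2 statements merged into one kernel-verified Lean document; each statement's English description precedes it below -/
import Mathlib

section
/- Let g, g' ⊆ Q be finite sets with |g| and |g'| even, such that |f_j ∩ g| and |f_j ∩ g'| are even for every j ∈ C_X, and |g ∩ g'| ≥ 2. Suppose every j ∈ C_X with f_j ∩ (g ∩ g') ≠ ∅ satisfies f_j ∩ (g Δ g') ≠ ∅, where Δ denotes symmetric difference. Let e ⊆ Q satisfy |e ∩ (g \ g')| = ⌊|g \ g'|/2⌋, |e ∩ (g' \ g)| = ⌈|g' \ g|/2⌉, and |e ∩ (g ∩ g')| = 1. Then no family τ satisfies the simplified dual inequalities for e. -/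
open Finset

/-- The simplified dual inequalities for an error `e`. -/
def SimpDual {Q C_X : Type*} [Fintype C_X] [DecidableEq Q]
    (f : C_X → Finset Q) (e : Finset Q) (τ : C_X → Q → ℝ) : Prop :=
  (∀ i, ∑ j ∈ Finset.univ.filter (fun j => i ∈ f j), τ j i ≤
      if i ∈ e then (-1 : ℝ) else 1) ∧
  (∀ j, ∀ i ∈ f j, ∀ i' ∈ f j, i ≠ i' → 0 ≤ τ j i + τ j i')

/-!
Put `s := g Δ g'`. Every check meets `s` in an even number of qubits, hence never in exactly one.
On a set that is not a singleton, values with nonnegative pairwise sums have a nonnegative total,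
so `∑ i ∈ f j ∩ s, τ j i` is nonnegative for every check `j`. Since `e` contains half of `s`, the
qubit inequalities over `s` bound the sum of these totals by `0`. On the other hand, the inequality
at a qubit `i ∈ e ∩ (g ∩ g')` forces `τ j i < 0` for some check `j`. Then `τ j` is positive at every
other qubit of `j`, in particular on the nonempty set `f j ∩ s`, so the total of `j` is positive, a
contradiction.
-/

theorem sum_nonneg_of_pairwise_add_nonneg {ι M : Type*} [AddCommMonoid M] [LinearOrder M]
    [IsOrderedAddMonoid M] {s : Finset ι} {t : ι → M} (hs : #s ≠ 1)
    (ht : ∀ i ∈ s, ∀ k ∈ s, i ≠ k → 0 ≤ t i + t k) : 0 ≤ ∑ i ∈ s, t i := by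
  classical
  by_cases hnonneg : ∀ i ∈ s, 0 ≤ t i
  · exact sum_nonneg hnonneg
  push Not at hnonneg
  obtain ⟨m, hm, hm_neg⟩ := hnonneg
  have hrest : ∀ i ∈ s.erase m, 0 ≤ t i := fun i hi ↦ by
    by_contra! hi_neg
    have hadd_neg : t i + t m < 0 := add_neg_of_neg_of_nonpos hi_neg hm_neg.le
    exact (ht i (mem_of_mem_erase hi) m hm (ne_of_mem_erase hi)).not_gt hadd_neg
  have hs_nontrivial : s.Nontrivial :=
    one_lt_card_iff_nontrivial.1 ((one_le_card.2 ⟨m, hm⟩).lt_of_ne hs.symm)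
  obtain ⟨k, hk, hkm⟩ := hs_nontrivial.exists_ne m
  calc 0 ≤ t m + t k := ht m hm k hk hkm.symm
    _ ≤ t m + ∑ i ∈ s.erase m, t i := by
      gcongr
      exact single_le_sum hrest (mem_erase.2 ⟨hkm, hk⟩)
    _ = ∑ i ∈ s, t i := add_sum_erase s t hm

section

variable {α : Type*} [DecidableEq α]

theorem sum_ite_mem_neg_one_one {R : Type*} [Ring R] (s u : Finset α) :
    ∑ i ∈ s, (if i ∈ u then (-1 : R) else 1) = #s - 2 * #(u ∩ s) := by
  have hsign (i : α) : (if i ∈ u then (-1 : R) else 1) = 1 - 2 * if i ∈ u then 1 else 0 := by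
    split_ifs <;> norm_num
  simp only [hsign, sum_sub_distrib, ← mul_sum, sum_ite_mem, sum_const, nsmul_one, inter_comm s]

theorem card_symmDiff (s t : Finset α) : #(symmDiff s t) = #(s \ t) + #(t \ s) :=
  card_union_of_disjoint disjoint_sdiff_sdiff

theorem inter_symmDiff_distrib_left (u s t : Finset α) :
    u ∩ symmDiff s t = symmDiff (u ∩ s) (u ∩ t) :=
  inf_symmDiff_distrib_left u s t

theorem even_card_symmDiff {s t : Finset α} (hs : Even #s) (ht : Even #t) :
    Even #(symmDiff s t) := by
  have hs_split := card_sdiff_add_card_inter s t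
  have ht_split := card_sdiff_add_card_inter t s
  rw [inter_comm t s] at ht_split
  rw [card_symmDiff]
  grind

theorem card_symmDiff_le_two_mul_card_inter {u s t : Finset α} (heven : Even #(symmDiff s t))
    (hst : #(s \ t) / 2 ≤ #(u ∩ (s \ t))) (hts : (#(t \ s) + 1) / 2 ≤ #(u ∩ (t \ s))) :
    #(symmDiff s t) ≤ 2 * #(u ∩ symmDiff s t) := by
  have hdistrib (a b : Finset α) : u ∩ (a \ b) = (u ∩ a) \ (u ∩ b) := inf_sdiff_distrib_left u a b
  have hinter : #(u ∩ symmDiff s t) = #(u ∩ (s \ t)) + #(u ∩ (t \ s)) := by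
    rw [inter_symmDiff_distrib_left, card_symmDiff, hdistrib s, hdistrib t]
  rw [card_symmDiff] at heven ⊢
  grind

end

section

variable {Q C_X : Type*} [DecidableEq Q] {f : C_X → Finset Q} {s e : Finset Q}

/-- A stopping set of the Tanner graph given by the supports `f`: a set of qubits that no check
meets in exactly one qubit. The pair inequalities of each check then give the values of `τ` on its
qubits in the set a nonnegative total. -/
def IsStoppingSet (f : C_X → Finset Q) (s : Finset Q) : Prop :=
  ∀ j, #(f j ∩ s) ≠ 1

theorem IsStoppingSet.of_even (hs : ∀ j, Even #(f j ∩ s)) : IsStoppingSet f s :=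
  fun j hj ↦ Nat.not_even_one (hj ▸ hs j)

theorem isStoppingSet_symmDiff {t : Finset Q} (hs : ∀ j, Even #(f j ∩ s))
    (ht : ∀ j, Even #(f j ∩ t)) : IsStoppingSet f (symmDiff s t) :=
  .of_even fun j ↦ by
    simpa only [inter_symmDiff_distrib_left] using even_card_symmDiff (hs j) (ht j)

variable [Fintype C_X] {τ : C_X → Q → ℝ}

namespace SimpDual

theorem sum_sum_inter_le (h : SimpDual f e τ) (s : Finset Q) :
    ∑ j, ∑ i ∈ f j ∩ s, τ j i ≤ #s - 2 * #(e ∩ s) :=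
  calc ∑ j, ∑ i ∈ f j ∩ s, τ j i = ∑ i ∈ s, ∑ j with i ∈ f j, τ j i :=
        sum_comm' fun j i ↦ by simp [and_comm]
    _ ≤ ∑ i ∈ s, if i ∈ e then (-1 : ℝ) else 1 := sum_le_sum fun i _ ↦ h.1 i
    _ = #s - 2 * #(e ∩ s) := sum_ite_mem_neg_one_one s e

theorem sum_inter_nonneg (h : SimpDual f e τ) (hs : IsStoppingSet f s) (j : C_X) :
    0 ≤ ∑ i ∈ f j ∩ s, τ j i :=
  sum_nonneg_of_pairwise_add_nonneg (hs j) fun i hi k hk ↦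
    h.2 j i (mem_of_mem_inter_left hi) k (mem_of_mem_inter_left hk)

theorem exists_neg (h : SimpDual f e τ) {i : Q} (hi : i ∈ e) : ∃ j, i ∈ f j ∧ τ j i < 0 := by
  by_contra! hnonneg
  have hsum_nonneg : 0 ≤ ∑ j with i ∈ f j, τ j i :=
    sum_nonneg fun j hj ↦ hnonneg j (mem_filter.1 hj).2
  have hsum_le : ∑ j with i ∈ f j, τ j i ≤ -1 := by simpa only [if_pos hi] using h.1 i
  linarith

theorem sum_inter_pos (h : SimpDual f e τ) {i : Q} {j : C_X} (hij : i ∈ f j) (hneg : τ j i < 0)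
    (hi : i ∉ s) (hne : (f j ∩ s).Nonempty) : 0 < ∑ k ∈ f j ∩ s, τ j k := by
  refine sum_pos (fun k hk ↦ ?_) hne
  obtain ⟨hkj, hks⟩ := mem_inter.1 hk
  linarith [h.2 j i hij k hkj (ne_of_mem_of_not_mem hks hi).symm]

end SimpDual

theorem stmt7_general {t : Finset Q} (hs : IsStoppingSet f s) (hes : #s ≤ 2 * #(e ∩ s))
    (het : (e ∩ t).Nonempty) (hst : Disjoint s t)
    (hmeet : ∀ j, (f j ∩ t).Nonempty → (f j ∩ s).Nonempty) :
    ∀ τ : C_X → Q → ℝ, ¬ SimpDual f e τ := by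
  intro τ h
  obtain ⟨i, hi⟩ := het
  obtain ⟨hie, hit⟩ := mem_inter.1 hi
  obtain ⟨j, hij, hneg⟩ := h.exists_neg hie
  have hj_pos : 0 < ∑ k ∈ f j ∩ s, τ j k :=
    h.sum_inter_pos hij hneg (disjoint_right.1 hst hit) (hmeet j ⟨i, mem_inter.2 ⟨hij, hit⟩⟩)
  have htotal_pos : 0 < ∑ j, ∑ k ∈ f j ∩ s, τ j k :=
    sum_pos' (fun j _ ↦ h.sum_inter_nonneg hs j) ⟨j, mem_univ j, hj_pos⟩
  have hes_real : (#s : ℝ) ≤ 2 * #(e ∩ s) := mod_cast hes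
  linarith [h.sum_sum_inter_le s]

end

/-- Two overlapping even-weight stabilizers `g, g'` yield an error pattern `e`
for which no family `τ` satisfies the simplified dual inequalities. -/
theorem stmt7 {Q C_X : Type*} [Fintype C_X] [DecidableEq Q]
    (f : C_X → Finset Q) (g g' : Finset Q)
    (hg : Even g.card) (hg' : Even g'.card)
    (hfg : ∀ j, Even ((f j ∩ g).card)) (hfg' : ∀ j, Even ((f j ∩ g').card))
    (hoverlap : 2 ≤ (g ∩ g').card)
    (hX : ∀ j, (f j ∩ (g ∩ g')).Nonempty → (f j ∩ symmDiff g g').Nonempty)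
    (e : Finset Q)
    (he1 : (e ∩ (g \ g')).card = (g \ g').card / 2)
    (he2 : (e ∩ (g' \ g)).card = ((g' \ g).card + 1) / 2)
    (he3 : (e ∩ (g ∩ g')).card = 1) :
    ∀ τ : C_X → Q → ℝ, ¬ SimpDual f e τ :=
  stmt7_general (isStoppingSet_symmDiff hfg hfg')
    (card_symmDiff_le_two_mul_card_inter (even_card_symmDiff hg hg') he1.ge he2.ge)
    (card_pos.1 (he3 ▸ one_pos)) (disjoint_symmDiff_inf g g') hX
end

section
/- Suppose (x, w) is feasible for the syndrome-based LP with syndrome s, every value x_i and every value w_{j,S} lies in {0, 1}, and Σ_{i ∈ Q} x_i ≤ Σ_{i ∈ Q} x̃_i for every feasible pair (x̃, w̃) of the same LP (i.e. (x, w) is an optimal solution that happens to be integral). Then the set y = {i ∈ Q : x_i = 1} satisfies |y ∩ f_j| ≡ s_j (mod 2) for every j ∈ C_X, and |y| ≤ |y'| for every set y' ⊆ Q with |y' ∩ f_j| ≡ s_j (mod 2) for every j ∈ C_X. In other words, an integral optimal solution of the LP relaxation is a minimum-weight error consistent with the syndrome. -/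
open Finset

/-- Feasibility for the syndrome-based LP. -/
def SynFeasible {Q C_X : Type*} [DecidableEq Q]
    (f : C_X → Finset Q) (s : C_X → ZMod 2) (x : Q → ℝ) (w : C_X → Finset Q → ℝ) : Prop :=
  (∀ j, ∑ S ∈ (f j).powerset.filter (fun S => (S.card : ZMod 2) = s j), w j S = 1) ∧
  (∀ j, ∀ i ∈ f j,
    ∑ S ∈ (f j).powerset.filter (fun S => (S.card : ZMod 2) = s j ∧ i ∈ S), w j S = x i) ∧
  (∀ i, 0 ≤ x i) ∧
  (∀ j, ∀ S ∈ (f j).powerset.filter (fun S => (S.card : ZMod 2) = s j), 0 ≤ w j S)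

/-!
The weights `w j` form a probability distribution on the subsets of `f j` of parity `s j`, and the
`x i` are its marginals. When the marginal at `i` is `0` or `1`, the sets of positive weight either
all avoid `i` or all contain it; so an integral `x` forces `w j` to be concentrated on
`{i | x i = 1} ∩ f j`, which therefore has parity `s j`. Conversely, the point masses at `y' ∩ f j`
make the indicator of any consistent `y'` feasible, with objective value `#y'`, and optimality of
`x` gives `#{i | x i = 1} ≤ #y'`.
-/

section Marginal

variable {α R : Type*} [DecidableEq α] [AddCommMonoid R]

/-- The marginal at `a` of a weight function `w` on the family `𝒜`: the total weight of the members
of `𝒜` containing `a`. It is not normalised by the total weight of `𝒜`. -/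
def marginal (𝒜 : Finset (Finset α)) (w : Finset α → R) (a : α) : R :=
  ∑ T ∈ 𝒜 with a ∈ T, w T

theorem marginal_single {𝒜 : Finset (Finset α)} {S : Finset α} (hS : S ∈ 𝒜) (r : R) (a : α) :
    marginal 𝒜 (Pi.single S r) a = if a ∈ S then r else 0 := by
  simp only [marginal, sum_pi_single', mem_filter, hS, true_and]

variable [PartialOrder R] [IsOrderedCancelAddMonoid R]
  {𝒜 : Finset (Finset α)} {w : Finset α → R} {S : Finset α} {a : α}

theorem marginal_pos (hw : ∀ T ∈ 𝒜, 0 ≤ w T) (hS : S ∈ 𝒜) (hpos : 0 < w S) (ha : a ∈ S) :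
    0 < marginal 𝒜 w a :=
  sum_pos' (fun T hT ↦ hw T (mem_of_mem_filter T hT)) ⟨S, mem_filter.2 ⟨hS, ha⟩, hpos⟩

theorem marginal_lt_sum (hw : ∀ T ∈ 𝒜, 0 ≤ w T) (hS : S ∈ 𝒜) (hpos : 0 < w S) (ha : a ∉ S) :
    marginal 𝒜 w a < ∑ T ∈ 𝒜, w T :=
  sum_lt_sum_of_subset (filter_subset _ _) hS (fun h ↦ ha (mem_filter.1 h).2) hpos
    fun T hT _ ↦ hw T hT

theorem mem_iff_marginal_eq_sum (hw : ∀ T ∈ 𝒜, 0 ≤ w T) (hS : S ∈ 𝒜) (hpos : 0 < w S)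
    (h : marginal 𝒜 w a = 0 ∨ marginal 𝒜 w a = ∑ T ∈ 𝒜, w T) :
    a ∈ S ↔ marginal 𝒜 w a = ∑ T ∈ 𝒜, w T where
  mp ha := h.resolve_left (marginal_pos hw hS hpos ha).ne'
  mpr heq := by_contra fun ha ↦ (marginal_lt_sum hw hS hpos ha).ne heq

end Marginal

theorem sum_eq_card_filter_eq_one {ι R : Type*} [NonAssocSemiring R] [DecidableEq R]
    {t : Finset ι} {x : ι → R} (hx : ∀ i ∈ t, x i = 0 ∨ x i = 1) :
    ∑ i ∈ t, x i = #{i ∈ t | x i = 1} := by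
  rw [← sum_boole]
  refine sum_congr rfl fun i hi ↦ ?_
  split_ifs with h
  · exact h
  · exact (hx i hi).resolve_right h

section Syndrome

variable {Q C_X : Type*}

/-- The subsets of `t` whose cardinality has parity `b`: the local configurations at a check with
support `t` and syndrome bit `b`. -/
def parityPowerset (t : Finset Q) (b : ZMod 2) : Finset (Finset Q) :=
  {S ∈ t.powerset | (#S : ZMod 2) = b}

theorem mem_parityPowerset {t S : Finset Q} {b : ZMod 2} :
    S ∈ parityPowerset t b ↔ S ⊆ t ∧ (#S : ZMod 2) = b := by
  rw [parityPowerset, mem_filter, mem_powerset]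

variable [DecidableEq Q]

/-- The error `y` is consistent with the syndrome `s`: it meets the support of each check in a set
of the parity prescribed by `s`. -/
def IsConsistent (f : C_X → Finset Q) (s : C_X → ZMod 2) (y : Finset Q) : Prop :=
  ∀ j, (#(y ∩ f j) : ZMod 2) = s j

variable {f : C_X → Finset Q} {s : C_X → ZMod 2} {x : Q → ℝ} {w : C_X → Finset Q → ℝ}
  {y : Finset Q}

theorem synFeasible_iff :
    SynFeasible f s x w ↔
      (∀ j, ∑ S ∈ parityPowerset (f j) (s j), w j S = 1) ∧
      (∀ j, ∀ i ∈ f j, marginal (parityPowerset (f j) (s j)) (w j) i = x i) ∧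
      (∀ i, 0 ≤ x i) ∧
      (∀ j, ∀ S ∈ parityPowerset (f j) (s j), 0 ≤ w j S) := by
  simp only [SynFeasible, parityPowerset, marginal, filter_filter]

theorem SynFeasible.inter_eq_of_pos (hfeas : SynFeasible f s x w)
    (hx : ∀ i, x i = 0 ∨ x i = 1) (hy : ∀ i, i ∈ y ↔ x i = 1) {j : C_X} {S : Finset Q}
    (hS : S ∈ parityPowerset (f j) (s j)) (hpos : 0 < w j S) : y ∩ f j = S := by
  obtain ⟨hsum, hmarg, -, hw⟩ := synFeasible_iff.1 hfeas
  have mem_S_iff : ∀ i ∈ f j, (i ∈ S ↔ x i = 1) := fun i hi ↦ by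
    have h := mem_iff_marginal_eq_sum (a := i) (hw j) hS hpos
    rw [hsum, hmarg j i hi] at h
    exact h (hx i)
  have hSf : S ⊆ f j := (mem_parityPowerset.1 hS).1
  ext i
  rw [mem_inter, hy]
  exact ⟨fun h ↦ (mem_S_iff i h.2).2 h.1, fun h ↦ ⟨(mem_S_iff i (hSf h)).1 h, hSf h⟩⟩

theorem SynFeasible.isConsistent (hfeas : SynFeasible f s x w)
    (hx : ∀ i, x i = 0 ∨ x i = 1) (hy : ∀ i, i ∈ y ↔ x i = 1) : IsConsistent f s y := by
  intro j
  obtain ⟨hsum, -, -, hw⟩ := synFeasible_iff.1 hfeas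
  obtain ⟨S, hS, hne⟩ := exists_ne_zero_of_sum_ne_zero ((hsum j).trans_ne one_ne_zero)
  have hpos : 0 < w j S := (hw j S hS).lt_of_ne' hne
  rw [hfeas.inter_eq_of_pos hx hy hS hpos]
  exact (mem_parityPowerset.1 hS).2

theorem IsConsistent.inter_mem_parityPowerset (hy : IsConsistent f s y) (j : C_X) :
    y ∩ f j ∈ parityPowerset (f j) (s j) :=
  mem_parityPowerset.2 ⟨inter_subset_right, hy j⟩

theorem IsConsistent.synFeasible (hy : IsConsistent f s y) :
    SynFeasible f s (fun i ↦ if i ∈ y then 1 else 0) (fun j ↦ Pi.single (y ∩ f j) 1) := by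
  refine synFeasible_iff.2 ⟨fun j ↦ ?_, fun j i hi ↦ ?_, fun i ↦ ?_, fun j S _ ↦ ?_⟩
  · rw [sum_pi_single', if_pos (hy.inter_mem_parityPowerset j)]
  · simp only [marginal_single (hy.inter_mem_parityPowerset j), mem_inter, hi, and_true]
  · positivity
  · have h : (0 : Finset Q → ℝ) ≤ Pi.single (y ∩ f j) 1 := Pi.single_nonneg.2 zero_le_one
    exact h S

end Syndrome

/-- An integral optimal solution of the syndrome-based LP relaxation is a
minimum-weight error consistent with the syndrome. -/
theorem stmt13 {Q C_X : Type*} [Fintype Q] [DecidableEq Q]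
    (f : C_X → Finset Q) (s : C_X → ZMod 2)
    (x : Q → ℝ) (w : C_X → Finset Q → ℝ)
    (hfeas : SynFeasible f s x w)
    (hx01 : ∀ i, x i = 0 ∨ x i = 1)
    (hw01 : ∀ j, ∀ S ∈ (f j).powerset.filter (fun S => (S.card : ZMod 2) = s j),
      w j S = 0 ∨ w j S = 1)
    (hopt : ∀ (xt : Q → ℝ) (wt : C_X → Finset Q → ℝ), SynFeasible f s xt wt →
      ∑ i, x i ≤ ∑ i, xt i) :
    (∀ j, ((((Finset.univ.filter (fun i => x i = 1)) ∩ f j).card : ZMod 2) = s j)) ∧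
      ∀ y' : Finset Q, (∀ j, (((y' ∩ f j).card : ZMod 2) = s j)) →
        (Finset.univ.filter (fun i => x i = 1)).card ≤ y'.card := by
  refine ⟨hfeas.isConsistent hx01 fun i ↦ mem_filter_univ i, fun y' hy' ↦ ?_⟩
  have hle : ((#{i | x i = 1} : ℕ) : ℝ) ≤ #y' :=
    calc ((#{i | x i = 1} : ℕ) : ℝ)
      _ = ∑ i, x i := (sum_eq_card_filter_eq_one fun i _ ↦ hx01 i).symm
      _ ≤ ∑ i, if i ∈ y' then 1 else 0 := hopt _ _ (IsConsistent.synFeasible hy')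
      _ = #y' := by rw [sum_boole, filter_univ_mem]
  exact_mod_cast hle
end
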